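/- Let k be a field of characteristic 3 and let W = (V₁ ⊗ sp(V₂)) ⊕ V₂ be the space described in the context, with the alternating bilinear form (·|·) and the symmetric bilinear map d : W × W → gl(W) described there. Then W, endowed with the triple product [ABC] := d_{A,B}(C) and the form (·|·), is a symplectic triple system. -/

import Mathlib

open scoped TensorProduct

/-- A symplectic triple system: a finite-dimensional vector space `T` over a field `k`
with a nonzero alternating bilinear form `B` and a trilinear product `tp` satisfying
identities (a)–(d). -/
def IsSympTripleSystem (k T : Type*) [Field k] [AddCommGroup T] [Module k T]
    (tp : T →ₗ[k] T →ₗ[k] T →ₗ[k] T) (B : T →ₗ[k] T →ₗ[k] k) : Prop :=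
  (∀ x : T, B x x = 0) ∧ B ≠ 0 ∧
  (∀ x y z : T, tp x y z = tp y x z) ∧
  (∀ x y z : T, tp x y z - tp x z y = B x z • y - B x y • z + (2 * B y z) • x) ∧
  (∀ x y u v w : T, tp x y (tp u v w) =
      tp (tp x y u) v w + tp u (tp x y v) w + tp u v (tp x y w)) ∧
  (∀ x y u v : T, B (tp x y u) v + B u (tp x y v) = 0)

/-- The symplectic Lie algebra `sp(V)` of a bilinear form, as a submodule of
`End(V) = V →ₗ[k] V`. -/
def spSub (k V : Type*) [Field k] [AddCommGroup V] [Module k V]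
    (Bv : V →ₗ[k] V →ₗ[k] k) : Submodule k (V →ₗ[k] V) where
  carrier := {f | ∀ u w : V, Bv (f u) w + Bv u (f w) = 0}
  add_mem' := by
    intro f g hf hg u w
    simp only [Set.mem_setOf_eq, LinearMap.add_apply, map_add] at *
    linear_combination hf u w + hg u w
  zero_mem' := by
    intro u w
    simp
  smul_mem' := by
    intro c f hf u w
    simp only [Set.mem_setOf_eq, LinearMap.smul_apply, map_smul, smul_eq_mul] at *
    linear_combination c * hf u w

/-- The map `γ_{u,v} = ⟨u|·⟩v + ⟨v|·⟩u`. -/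
def gammaMap (k V : Type*) [Field k] [AddCommGroup V] [Module k V]
    (Bv : V →ₗ[k] V →ₗ[k] k) (u v : V) : V →ₗ[k] V :=
  (Bv u).smulRight v + (Bv v).smulRight u

/-!
The operators `d x y` lie in the sum of the actions on `W` of `sp(V₁)`, of `sp(V₂)` and of an odd
part `V₁ ⊗ V₂`. Identities (c) and (d) say that every `d x y` is a derivation of the triple product
and is skew for the form; both are linear conditions on operators, so it is enough to verify them
on these three families. Two identities for an alternating form on a plane drive the computations:
`⟨u|v⟩w + ⟨v|w⟩u + ⟨w|u⟩v = 0`, and its consequence `st + ts = tr(st)` for `s, t ∈ sp(V)`.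
Characteristic 3 enters only through the odd operators and identity (b).
-/

section FinrankTwo

variable {R M : Type*} [CommRing R] [StrongRankCondition R] [AddCommGroup M] [Module R M]
  [Module.Free R M] {B : M →ₗ[R] M →ₗ[R] R}

lemma isAlt_smul_cyclic_of_finrank_eq_two (halt : B.IsAlt)
    (hM : Module.finrank R M = 2) (u v w : M) :
    B u v • w + B v w • u + B w u • v = 0 := by
  have : Module.Finite R M := Module.finite_of_finrank_pos (by simp [hM])
  let b := Module.finBasisOfFinrankEq R M hM
  have hb : B (b 1) (b 0) = -B (b 0) (b 1) := (halt.neg _ _).symm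
  rw [← b.sum_repr u, ← b.sum_repr v, ← b.sum_repr w]
  simp only [Fin.sum_univ_two, map_add, map_smul, LinearMap.add_apply, LinearMap.smul_apply,
    halt.self_eq_zero, hb, smul_eq_mul]
  module

lemma trace_mul_isAlt_of_finrank_eq_two (halt : B.IsAlt)
    (hM : Module.finrank R M = 2) (f : Module.End R M) (u v : M) :
    LinearMap.trace R M f * B u v = B (f u) v + B u (f v) := by
  have : Module.Finite R M := Module.finite_of_finrank_pos (by simp [hM])
  have hf : B u v • f = (B u).smulRight (f v) - (B v).smulRight (f u) := LinearMap.ext fun w ↦ by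
    have hw := congrArg f (isAlt_smul_cyclic_of_finrank_eq_two halt hM u v w)
    simp only [map_add, map_smul, map_zero, ← halt.neg u w] at hw
    simp only [LinearMap.smul_apply, LinearMap.sub_apply, LinearMap.smulRight_apply]
    linear_combination (norm := module) hw
  have htr := congrArg (LinearMap.trace R M) hf
  simp only [map_smul, map_sub, LinearMap.trace_smulRight, smul_eq_mul] at htr
  linear_combination htr + halt.neg v (f u)

end FinrankTwo

section SymplecticPlane

attribute [local instance] LieRing.ofAssociativeRing

variable {k V : Type*} [Field k] [AddCommGroup V] [Module k V] {B : V →ₗ[k] V →ₗ[k] k}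

namespace spSub

lemma form_apply_left (s : spSub k V B) (u v : V) : B (s.1 u) v = -B u (s.1 v) :=
  eq_neg_of_add_eq_zero_left (s.2 u v)

/-- The commutator bracket of the symplectic Lie algebra, as a bilinear map. -/
def bracket (B : V →ₗ[k] V →ₗ[k] k) : spSub k V B →ₗ[k] spSub k V B →ₗ[k] spSub k V B :=
  LinearMap.mk₂ k
    (fun s t ↦ ⟨⁅(s : Module.End k V), (t : Module.End k V)⁆, fun u v ↦ by
      simp only [Ring.lie_def, LinearMap.sub_apply, Module.End.mul_apply, map_sub, form_apply_left]
      ring⟩)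
    (fun _ _ _ ↦ Subtype.ext <| add_lie _ _ _)
    (fun _ _ _ ↦ Subtype.ext <| smul_lie _ _ _)
    (fun _ _ _ ↦ Subtype.ext <| lie_add _ _ _)
    (fun _ _ _ ↦ Subtype.ext <| lie_smul _ _ _)

lemma bracket_apply (s t : spSub k V B) (v : V) :
    (bracket B s t).1 v = s.1 (t.1 v) - t.1 (s.1 v) := rfl

lemma neg_bracket (s t : spSub k V B) : -bracket B t s = bracket B s t :=
  Subtype.ext (lie_skew _ _)

lemma bracket_leibniz (r s t : spSub k V B) :
    bracket B r (bracket B s t) = bracket B (bracket B r s) t + bracket B s (bracket B r t) :=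
  Subtype.ext (leibniz_lie _ _ _)

/-- The map `γ : V × V → sp(V)` given by `gammaMap`. -/
def gamma (halt : B.IsAlt) : V →ₗ[k] V →ₗ[k] spSub k V B :=
  LinearMap.mk₂ k
    (fun u v ↦ ⟨gammaMap k V B u v, fun x y ↦ by
      simp only [gammaMap, LinearMap.add_apply, LinearMap.smulRight_apply, map_add, map_smul,
        LinearMap.smul_apply, smul_eq_mul]
      linear_combination -B u y * halt.neg v x - B v y * halt.neg u x⟩)
    (fun _ _ _ ↦ Subtype.ext <| LinearMap.ext fun _ ↦ by
      simp only [gammaMap, Submodule.coe_add, LinearMap.add_apply, LinearMap.smulRight_apply,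
        map_add]
      module)
    (fun c _ _ ↦ Subtype.ext <| LinearMap.ext fun _ ↦ by simp [gammaMap, mul_smul, smul_comm _ c])
    (fun _ _ _ ↦ Subtype.ext <| LinearMap.ext fun _ ↦ by
      simp only [gammaMap, Submodule.coe_add, LinearMap.add_apply, LinearMap.smulRight_apply,
        map_add]
      module)
    (fun c _ _ ↦ Subtype.ext <| LinearMap.ext fun _ ↦ by simp [gammaMap, mul_smul, smul_comm _ c])

variable (halt : B.IsAlt)

lemma coe_gamma (u v : V) : (gamma halt u v).1 = gammaMap k V B u v := rfl

lemma gamma_apply (u v w : V) : (gamma halt u v).1 w = B u w • v + B v w • u := rfl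

lemma gamma_comm (u v : V) : gamma halt u v = gamma halt v u :=
  Subtype.ext <| LinearMap.ext fun _ ↦ add_comm _ _

lemma gamma_cyclic (u v w : V) :
    (gamma halt u v).1 w + (gamma halt v w).1 u + (gamma halt w u).1 v = 0 := by
  simp only [gamma_apply, ← halt.neg u v, ← halt.neg v w, ← halt.neg w u]
  module

lemma bracket_gamma (s : spSub k V B) (u v : V) :
    bracket B s (gamma halt u v) = gamma halt (s.1 u) v + gamma halt u (s.1 v) := by
  refine Subtype.ext <| LinearMap.ext fun w ↦ ?_
  simp only [bracket_apply, gamma_apply, map_add, map_smul, Submodule.coe_add, LinearMap.add_apply,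
    form_apply_left]
  module

/-- The trace form `(s, t) ↦ tr(st)` of `sp(V)` acting on `V`. -/
noncomputable def traceForm (B : V →ₗ[k] V →ₗ[k] k) : LinearMap.BilinForm k (spSub k V B) :=
  ((LinearMap.mul k (Module.End k V)).compr₂ (LinearMap.trace k V)).domRestrict₁₂ _ _

lemma traceForm_apply (s t : spSub k V B) : traceForm B s t = LinearMap.trace k V (s.1 * t.1) := rfl

lemma traceForm_comm (s t : spSub k V B) : traceForm B s t = traceForm B t s :=
  LinearMap.trace_mul_comm k _ _

lemma traceForm_bracket (r s t : spSub k V B) :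
    traceForm B (bracket B r s) t = -traceForm B s (bracket B r t) := by
  change LinearMap.trace k V ((r.1 * s.1 - s.1 * r.1) * t.1) =
    -LinearMap.trace k V (s.1 * (r.1 * t.1 - t.1 * r.1))
  simp only [sub_mul, mul_sub, mul_assoc, map_sub, LinearMap.trace_mul_comm k r.1]
  ring

lemma traceForm_gamma [FiniteDimensional k V] (s : spSub k V B) (u v : V) :
    traceForm B s (gamma halt u v) = 2 * B u (s.1 v) := by
  have hmul : s.1 * (gamma halt u v).1 = (B u).smulRight (s.1 v) + (B v).smulRight (s.1 u) :=
    LinearMap.ext fun w ↦ by simp [gamma_apply]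
  rw [traceForm_apply, hmul, map_add, LinearMap.trace_smulRight, LinearMap.trace_smulRight]
  linear_combination -form_apply_left s u v - halt.neg v (s.1 u)

variable (hV : Module.finrank k V = 2)
include halt hV

lemma gamma_apply_sub_gamma_apply (s : spSub k V B) (u v : V) :
    gamma halt u (s.1 v) - gamma halt (s.1 u) v = (2 * B u v) • s := by
  refine Subtype.ext <| LinearMap.ext fun w ↦ ?_
  have hs := congrArg s.1 (isAlt_smul_cyclic_of_finrank_eq_two halt hV u v w)
  have hsw := isAlt_smul_cyclic_of_finrank_eq_two halt hV u v (s.1 w)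
  simp only [map_add, map_smul, map_zero, ← halt.neg u w, ← halt.neg u (s.1 w)] at hs hsw
  simp only [Submodule.coe_sub, Submodule.coe_smul, LinearMap.sub_apply, LinearMap.smul_apply,
    gamma_apply, form_apply_left]
  linear_combination (norm := module) -hs - hsw

variable (hne : B ≠ 0)
include hne

lemma anticommutator (s t : spSub k V B) (v : V) :
    s.1 (t.1 v) + t.1 (s.1 v) = traceForm B s t • v := by
  obtain ⟨x, y, hxy⟩ : ∃ x y, B x y ≠ 0 := by
    by_contra! h
    exact hne (LinearMap.ext₂ h)
  have hform (w : V) : B (s.1 (t.1 v) + t.1 (s.1 v) - traceForm B s t • v) w = 0 := by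
    have htr := trace_mul_isAlt_of_finrank_eq_two halt hV (s.1 * t.1) v w
    simp only [Module.End.mul_apply] at htr
    simp only [map_add, map_sub, map_smul, LinearMap.add_apply, LinearMap.sub_apply,
      LinearMap.smul_apply, smul_eq_mul, traceForm_apply, htr, form_apply_left]
    ring
  have hcyc := isAlt_smul_cyclic_of_finrank_eq_two halt hV x y
    (s.1 (t.1 v) + t.1 (s.1 v) - traceForm B s t • v)
  rw [← halt.neg _ y, hform, hform] at hcyc
  simpa [hxy, sub_eq_zero] using hcyc

lemma bracket_bracket (r s t : spSub k V B) :
    bracket B (bracket B s t) r = (2 * traceForm B t r) • s - (2 * traceForm B s r) • t := by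
  refine Subtype.ext <| LinearMap.ext fun v ↦ ?_
  simp only [bracket_apply, Submodule.coe_sub, Submodule.coe_smul, LinearMap.sub_apply,
    LinearMap.smul_apply, map_sub]
  have hst := anticommutator halt hV hne
  have h1 := congrArg s.1 (hst t r v)
  have h2 := congrArg t.1 (hst s r v)
  simp only [map_add, map_smul] at h1 h2
  linear_combination (norm := module) h1 - h2 + hst t r (s.1 v) - hst s r (t.1 v)

end spSub

end SymplecticPlane

section Derivations

attribute [local instance] LieRing.ofAssociativeRing

/-- The derivations of a triple product `tp`, viewed as a bilinear map into `End(T)`. -/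
def tripleDerivations {R T : Type*} [CommRing R] [AddCommGroup T] [Module R T]
    (tp : T →ₗ[R] T →ₗ[R] Module.End R T) : Submodule R (Module.End R T) where
  carrier := {D | ∀ x y, ⁅D, tp x y⁆ = tp (D x) y + tp x (D y)}
  add_mem' {D E} hD hE x y := by
    simp only [add_lie, hD x y, hE x y, LinearMap.add_apply, map_add]
    abel
  zero_mem' x y := by simp
  smul_mem' c D hD x y := by
    simp only [smul_lie, hD x y, LinearMap.smul_apply, map_smul, smul_add]

end Derivations

/-- The underlying space `W = (V₁ ⊗ sp(V₂)) ⊕ V₂` of the triple system. -/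
abbrev STS8 {k V₂ : Type*} (V₁ : Type*) [Field k] [AddCommGroup V₁] [Module k V₁]
    [AddCommGroup V₂] [Module k V₂] (B₂ : V₂ →ₗ[k] V₂ →ₗ[k] k) : Type _ :=
  (V₁ ⊗[k] spSub k V₂ B₂) × V₂

namespace STS8

set_option maxSynthPendingDepth 3
attribute [local instance] LieRing.ofAssociativeRing

open spSub

variable {k V₁ V₂ : Type*} [Field k] [AddCommGroup V₁] [Module k V₁] [AddCommGroup V₂]
  [Module k V₂] {B₁ : V₁ →ₗ[k] V₁ →ₗ[k] k} {B₂ : V₂ →ₗ[k] V₂ →ₗ[k] k}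

@[elab_as_elim]
lemma induction {p : STS8 V₁ B₂ → Prop} (tmul : ∀ a s, p (a ⊗ₜ s, 0)) (vec : ∀ v, p (0, v))
    (add : ∀ x y, p x → p y → p (x + y)) (x : STS8 V₁ B₂) : p x := by
  obtain ⟨t, v⟩ := x
  have ht : p (t, 0) := by
    induction t with
    | zero => exact vec 0
    | tmul a s => exact tmul a s
    | add t t' ht ht' => simpa using add _ _ ht ht'
  simpa using add _ _ ht (vec v)

lemma induction_symm {p : STS8 V₁ B₂ → STS8 V₁ B₂ → Prop}
    (symm : ∀ x y, p x y → p y x) (add : ∀ x x' y, p x y → p x' y → p (x + x') y)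
    (tmul_tmul : ∀ a s b t, p (a ⊗ₜ s, 0) (b ⊗ₜ t, 0))
    (tmul_vec : ∀ a s v, p (a ⊗ₜ s, 0) (0, v)) (vec_vec : ∀ u v, p (0, u) (0, v))
    (x y : STS8 V₁ B₂) : p x y := by
  induction x using induction with
  | tmul a s =>
    induction y using induction with
    | tmul b t => exact tmul_tmul a s b t
    | vec v => exact tmul_vec a s v
    | add y y' h h' => exact symm _ _ <| add _ _ _ (symm _ _ h) (symm _ _ h')
  | vec u =>
    induction y using induction with
    | tmul b t => exact symm _ _ <| tmul_vec b t u
    | vec v => exact vec_vec u v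
    | add y y' h h' => exact symm _ _ <| add _ _ _ (symm _ _ h) (symm _ _ h')
  | add x x' h h' => exact add _ _ _ h h'

lemma hom_ext {M : Type*} [AddCommMonoid M] [Module k M] {f g : STS8 V₁ B₂ →ₗ[k] M}
    (tmul : ∀ a s, f (a ⊗ₜ s, 0) = g (a ⊗ₜ s, 0)) (vec : ∀ v, f (0, v) = g (0, v)) : f = g := by
  ext1
  · ext a s : 3
    exact tmul a s
  · exact LinearMap.ext vec

lemma bilin_ext {M : Type*} [AddCommMonoid M] [Module k M]
    {f g : STS8 V₁ B₂ →ₗ[k] STS8 V₁ B₂ →ₗ[k] M}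
    (tmul_tmul : ∀ a s b t, f (a ⊗ₜ s, 0) (b ⊗ₜ t, 0) = g (a ⊗ₜ s, 0) (b ⊗ₜ t, 0))
    (tmul_vec : ∀ a s v, f (a ⊗ₜ s, 0) (0, v) = g (a ⊗ₜ s, 0) (0, v))
    (vec_tmul : ∀ u a s, f (0, u) (a ⊗ₜ s, 0) = g (0, u) (a ⊗ₜ s, 0))
    (vec_vec : ∀ u v, f (0, u) (0, v) = g (0, u) (0, v)) : f = g :=
  hom_ext (fun a s ↦ hom_ext (tmul_tmul a s) (tmul_vec a s))
    fun u ↦ hom_ext (vec_tmul u) (vec_vec u)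

/-- The action of `sp(V₁)` on `W`. -/
def leftAction (B₁ : V₁ →ₗ[k] V₁ →ₗ[k] k) (B₂ : V₂ →ₗ[k] V₂ →ₗ[k] k) :
    spSub k V₁ B₁ →ₗ[k] Module.End k (STS8 V₁ B₂) where
  toFun σ := (σ.1.rTensor (spSub k V₂ B₂)).prodMap 0
  map_add' σ τ := hom_ext (by simp) (by simp)
  map_smul' c σ := hom_ext (by simp) (by simp)

/-- The action of `sp(V₂)` on `W`: adjoint on the factor `sp(V₂)`, natural on `V₂`. -/
def rightAction (V₁ : Type*) [AddCommGroup V₁] [Module k V₁] (B₂ : V₂ →ₗ[k] V₂ →ₗ[k] k) :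
    spSub k V₂ B₂ →ₗ[k] Module.End k (STS8 V₁ B₂) where
  toFun s := ((bracket B₂ s).lTensor V₁).prodMap s.1
  map_add' s t := hom_ext (by simp) (by simp)
  map_smul' c s := hom_ext (by simp) (by simp)

/-- The action on `W` of the odd part `V₁ ⊗ V₂` of the `ℤ/2`-graded Lie algebra spanned
by the operators `d x y`. -/
def oddAction (B₁ : V₁ →ₗ[k] V₁ →ₗ[k] k) (halt₂ : B₂.IsAlt) :
    V₁ →ₗ[k] V₂ →ₗ[k] Module.End k (STS8 V₁ B₂) :=
  LinearMap.mk₂ k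
    (fun a u ↦ (TensorProduct.mk k V₁ _ a ∘ₗ gamma halt₂ u ∘ₗ LinearMap.snd k _ _).prod
      (TensorProduct.lid k V₂ ∘ₗ
        TensorProduct.map (B₁ a) ((spSub k V₂ B₂).subtype.flip u) ∘ₗ LinearMap.fst k _ _))
    (fun _ _ _ ↦ hom_ext (by simp [add_smul]) (by simp))
    (fun _ _ _ ↦ hom_ext (by simp [mul_smul]) (by simp [TensorProduct.smul_tmul']))
    (fun _ _ _ ↦ hom_ext (by simp) (by simp [TensorProduct.tmul_add]))
    (fun c _ _ ↦ hom_ext (by simp [smul_comm c]) (by simp))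

section Actions

variable (σ τ : spSub k V₁ B₁) (s t : spSub k V₂ B₂) (a b : V₁) (u v : V₂) (halt₂ : B₂.IsAlt)

@[simp]
lemma leftAction_tmul : leftAction B₁ B₂ σ (a ⊗ₜ s, 0) = (σ.1 a ⊗ₜ s, 0) := by
  simp [leftAction]

@[simp]
lemma leftAction_vec : leftAction B₁ B₂ σ (0, v) = 0 := by
  simp [leftAction]

@[simp]
lemma rightAction_tmul : rightAction V₁ B₂ s (a ⊗ₜ t, 0) = (a ⊗ₜ bracket B₂ s t, 0) := by
  simp [rightAction]

@[simp]
lemma rightAction_vec : rightAction V₁ B₂ s (0, v) = (0, s.1 v) := by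
  simp [rightAction]

@[simp]
lemma oddAction_tmul : oddAction B₁ halt₂ a u (b ⊗ₜ s, 0) = (0, B₁ a b • s.1 u) := by
  simp [oddAction]

@[simp]
lemma oddAction_vec : oddAction B₁ halt₂ a u (0, v) = (a ⊗ₜ gamma halt₂ u v, 0) := by
  simp [oddAction]

lemma lie_leftAction_leftAction :
    ⁅leftAction B₁ B₂ σ, leftAction B₁ B₂ τ⁆ = leftAction B₁ B₂ (bracket B₁ σ τ) :=
  hom_ext
    (fun _ _ ↦ by simp [Ring.lie_def, bracket_apply, TensorProduct.sub_tmul])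
    (fun _ ↦ by simp [Ring.lie_def])

lemma lie_leftAction_rightAction : ⁅leftAction B₁ B₂ σ, rightAction V₁ B₂ s⁆ = 0 :=
  hom_ext (fun _ _ ↦ by simp [Ring.lie_def]) (fun _ ↦ by simp [Ring.lie_def])

lemma lie_rightAction_leftAction : ⁅rightAction V₁ B₂ s, leftAction B₁ B₂ σ⁆ = 0 := by
  rw [← lie_skew, lie_leftAction_rightAction, neg_zero]

lemma lie_rightAction_rightAction :
    ⁅rightAction V₁ B₂ s, rightAction V₁ B₂ t⁆ = rightAction V₁ B₂ (bracket B₂ s t) := by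
  refine hom_ext (fun a r ↦ ?_) (fun v ↦ by simp [Ring.lie_def, bracket_apply])
  simp [Ring.lie_def, bracket_leibniz s t r, TensorProduct.tmul_add]

lemma lie_leftAction_oddAction :
    ⁅leftAction B₁ B₂ σ, oddAction B₁ halt₂ a u⁆ = oddAction B₁ halt₂ (σ.1 a) u :=
  hom_ext
    (fun _ _ ↦ by simp [Ring.lie_def, form_apply_left])
    (fun _ ↦ by simp [Ring.lie_def])

lemma lie_oddAction_leftAction :
    ⁅oddAction B₁ halt₂ a u, leftAction B₁ B₂ σ⁆ = -oddAction B₁ halt₂ (σ.1 a) u := by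
  rw [← lie_skew, lie_leftAction_oddAction]

lemma lie_rightAction_oddAction :
    ⁅rightAction V₁ B₂ s, oddAction B₁ halt₂ a u⁆ = oddAction B₁ halt₂ a (s.1 u) := by
  refine hom_ext (fun b t ↦ ?_) (fun v ↦ ?_)
  · simp [Ring.lie_def, bracket_apply, ← smul_sub]
  · simp [Ring.lie_def, bracket_gamma, ← TensorProduct.tmul_sub]

lemma lie_oddAction_rightAction :
    ⁅oddAction B₁ halt₂ a u, rightAction V₁ B₂ s⁆ = -oddAction B₁ halt₂ a (s.1 u) := by
  rw [← lie_skew, lie_rightAction_oddAction]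

end Actions

lemma lie_oddAction_oddAction [CharP k 3] (halt₁ : B₁.IsAlt) (h₁ : Module.finrank k V₁ = 2)
    (halt₂ : B₂.IsAlt) (h₂ : Module.finrank k V₂ = 2) (a b : V₁) (u v : V₂) :
    ⁅oddAction B₁ halt₂ a u, oddAction B₁ halt₂ b v⁆ =
      B₂ u v • leftAction B₁ B₂ (gamma halt₁ a b) -
        B₁ a b • rightAction V₁ B₂ (gamma halt₂ u v) := by
  have three_eq_zero : (3 : k) = 0 := CharP.ofNat_eq_zero k 3
  refine hom_ext (fun c r ↦ ?_) (fun w ↦ ?_)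
  · have hcyc (z : spSub k V₂ B₂) := congrArg (· ⊗ₜ[k] z)
      (isAlt_smul_cyclic_of_finrank_eq_two halt₁ h₁ a b c)
    have hr : B₂ u v • r = gamma halt₂ (r.1 u) v - gamma halt₂ u (r.1 v) := by
      linear_combination (norm := module)
        three_eq_zero • B₂ u v • r + gamma_apply_sub_gamma_apply halt₂ h₂ r u v
    have hbracket : bracket B₂ (gamma halt₂ u v) r =
        -(gamma halt₂ (r.1 u) v + gamma halt₂ u (r.1 v)) := by
      rw [← bracket_gamma, neg_bracket]
    have hfst : B₁ b c • a ⊗ₜ[k] gamma halt₂ u (r.1 v) - B₁ a c • b ⊗ₜ gamma halt₂ v (r.1 u) =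
        (gamma halt₁ a b).1 c ⊗ₜ (B₂ u v • r) -
          B₁ a b • c ⊗ₜ bracket B₂ (gamma halt₂ u v) r := by
      simp only [TensorProduct.add_tmul, ← TensorProduct.smul_tmul', TensorProduct.zero_tmul,
        ← halt₁.neg a c] at hcyc
      rw [hr, hbracket, gamma_comm halt₂ v]
      simp only [gamma_apply, TensorProduct.add_tmul, TensorProduct.tmul_add,
        TensorProduct.tmul_sub, TensorProduct.tmul_neg, ← TensorProduct.smul_tmul']
      linear_combination (norm := module)
        three_eq_zero • (B₁ b c • a ⊗ₜ[k] gamma halt₂ u (r.1 v) -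
          B₁ a c • b ⊗ₜ gamma halt₂ (r.1 u) v) -
            hcyc (gamma halt₂ (r.1 u) v) - hcyc (gamma halt₂ u (r.1 v))
    simpa [Ring.lie_def] using hfst
  · simp only [Ring.lie_def, LinearMap.sub_apply, LinearMap.smul_apply, Module.End.mul_apply,
      oddAction_vec, oddAction_tmul, leftAction_vec, rightAction_vec, gamma_comm halt₂ u w,
      ← halt₁.neg a b]
    ext1
    · simp
    · simp only [Prod.snd_sub, Prod.smul_snd, Prod.snd_zero]
      linear_combination (norm := module) B₁ a b • gamma_cyclic halt₂ u v w

/-- The alternating form of `W`. -/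
noncomputable def form (B₁ : V₁ →ₗ[k] V₁ →ₗ[k] k) (B₂ : V₂ →ₗ[k] V₂ →ₗ[k] k) :
    LinearMap.BilinForm k (STS8 V₁ B₂) :=
  (LinearMap.BilinForm.tmul B₁ (traceForm B₂)).compl₁₂ (LinearMap.fst k _ _)
      (LinearMap.fst k _ _) +
    B₂.compl₁₂ (LinearMap.snd k _ _) (LinearMap.snd k _ _)

/-- The map `d : W × W → gl(W)`, assembled from its restrictions to the four products of the
summands `V₁ ⊗ sp(V₂)` and `V₂`. -/
noncomputable def tripleProduct (halt₁ : B₁.IsAlt) (halt₂ : B₂.IsAlt) :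
    STS8 V₁ B₂ →ₗ[k] STS8 V₁ B₂ →ₗ[k] Module.End k (STS8 V₁ B₂) :=
  let tensor := LinearMap.fst k (V₁ ⊗[k] spSub k V₂ B₂) V₂
  let vec := LinearMap.snd k (V₁ ⊗[k] spSub k V₂ B₂) V₂
  let tensorTensor := (TensorProduct.map₂ (gamma halt₁) (traceForm B₂)).compr₂
      (leftAction B₁ B₂ ∘ₗ (TensorProduct.rid k _).toLinearMap) -
    (TensorProduct.map₂ B₁ (bracket B₂)).compr₂
      (rightAction V₁ B₂ ∘ₗ (TensorProduct.lid k _).toLinearMap)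
  let tensorVec := TensorProduct.curry (TensorProduct.lift (oddAction B₁ halt₂) ∘ₗ
    (TensorProduct.lift (spSub k V₂ B₂).subtype).lTensor V₁ ∘ₗ
      (TensorProduct.assoc k _ _ _).toLinearMap)
  let vecVec := (gamma halt₂).compr₂ (rightAction V₁ B₂)
  tensorTensor.compl₁₂ tensor tensor - tensorVec.compl₁₂ tensor vec -
    (tensorVec.compl₁₂ tensor vec).flip - vecVec.compl₁₂ vec vec

section Values

variable (halt₁ : B₁.IsAlt) (halt₂ : B₂.IsAlt) (a b : V₁) (s t : spSub k V₂ B₂) (u v : V₂)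

@[simp]
lemma form_tmul_tmul : form B₁ B₂ (a ⊗ₜ s, 0) (b ⊗ₜ t, 0) = B₁ a b * traceForm B₂ s t := by
  simp [form, mul_comm]

@[simp]
lemma form_tmul_vec : form B₁ B₂ (a ⊗ₜ s, 0) (0, v) = 0 := by
  simp [form]

@[simp]
lemma form_vec_tmul : form B₁ B₂ (0, v) (a ⊗ₜ s, 0) = 0 := by
  simp [form]

@[simp]
lemma form_vec_vec : form B₁ B₂ (0, u) (0, v) = B₂ u v := by
  simp [form]

@[simp]
lemma tripleProduct_tmul_tmul : tripleProduct halt₁ halt₂ (a ⊗ₜ s, 0) (b ⊗ₜ t, 0) =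
    traceForm B₂ s t • leftAction B₁ B₂ (gamma halt₁ a b) -
      B₁ a b • rightAction V₁ B₂ (bracket B₂ s t) := by
  simp [tripleProduct]

@[simp]
lemma tripleProduct_tmul_vec :
    tripleProduct halt₁ halt₂ (a ⊗ₜ s, 0) (0, v) = -oddAction B₁ halt₂ a (s.1 v) := by
  simp [tripleProduct]

@[simp]
lemma tripleProduct_vec_tmul :
    tripleProduct halt₁ halt₂ (0, v) (a ⊗ₜ s, 0) = -oddAction B₁ halt₂ a (s.1 v) := by
  simp [tripleProduct]

@[simp]
lemma tripleProduct_vec_vec :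
    tripleProduct halt₁ halt₂ (0, u) (0, v) = -rightAction V₁ B₂ (gamma halt₂ u v) := by
  simp [tripleProduct]

end Values

section Generators

lemma neg_form (halt₁ : B₁.IsAlt) (halt₂ : B₂.IsAlt) (x y : STS8 V₁ B₂) :
    -form B₁ B₂ x y = form B₁ B₂ y x := by
  induction x, y using induction_symm with
  | symm x y h => rw [← h, neg_neg]
  | add x x' y h h' => simp only [map_add, LinearMap.add_apply, neg_add, h, h']
  | tmul_tmul a s b t => simp [← halt₁.neg a b, traceForm_comm t s]
  | tmul_vec a s v => simp
  | vec_vec u v => simpa using halt₂.neg u v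

lemma form_isAlt (halt₁ : B₁.IsAlt) (halt₂ : B₂.IsAlt) : (form B₁ B₂).IsAlt := fun x ↦ by
  induction x using induction with
  | tmul a s => simp [halt₁.self_eq_zero]
  | vec v => simp [halt₂.self_eq_zero]
  | add x y hx hy => simp [hx, hy, ← neg_form halt₁ halt₂ x y]

lemma form_ne_zero (hne₂ : B₂ ≠ 0) : form B₁ B₂ ≠ 0 := fun h ↦
  hne₂ <| LinearMap.ext₂ fun u v ↦ by rw [← form_vec_vec (B₁ := B₁), h]; rfl

variable (halt₁ : B₁.IsAlt) (halt₂ : B₂.IsAlt)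

lemma tripleProduct_comm (x y : STS8 V₁ B₂) :
    tripleProduct halt₁ halt₂ x y = tripleProduct halt₁ halt₂ y x := by
  induction x, y using induction_symm with
  | symm x y h => exact h.symm
  | add x x' y h h' => simp only [map_add, LinearMap.add_apply, h, h']
  | tmul_tmul a s b t =>
    simp [← halt₁.neg a b, ← neg_bracket t s, traceForm_comm t s, gamma_comm halt₁ b a]
  | tmul_vec a s v => simp
  | vec_vec u v => simp [gamma_comm halt₂ u v]

lemma tripleProduct_mem {P : Submodule k (Module.End k (STS8 V₁ B₂))}
    (left : ∀ σ, leftAction B₁ B₂ σ ∈ P) (right : ∀ s, rightAction V₁ B₂ s ∈ P)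
    (odd : ∀ a u, oddAction B₁ halt₂ a u ∈ P) (x y : STS8 V₁ B₂) :
    tripleProduct halt₁ halt₂ x y ∈ P := by
  induction x, y using induction_symm with
  | symm x y h => rwa [tripleProduct_comm]
  | add x x' y h h' => simpa only [map_add, LinearMap.add_apply] using P.add_mem h h'
  | tmul_tmul a s b t =>
    rw [tripleProduct_tmul_tmul]
    exact P.sub_mem (P.smul_mem _ (left _)) (P.smul_mem _ (right _))
  | tmul_vec a s v => simpa using odd a (s.1 v)
  | vec_vec u v => simpa using right (gamma halt₂ u v)

lemma mem_tripleDerivations_tripleProduct {D : Module.End k (STS8 V₁ B₂)}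
    (tmul_tmul : ∀ a s b t, ⁅D, tripleProduct halt₁ halt₂ (a ⊗ₜ s, 0) (b ⊗ₜ t, 0)⁆ =
      tripleProduct halt₁ halt₂ (D (a ⊗ₜ s, 0)) (b ⊗ₜ t, 0) +
        tripleProduct halt₁ halt₂ (a ⊗ₜ s, 0) (D (b ⊗ₜ t, 0)))
    (tmul_vec : ∀ a s v, ⁅D, tripleProduct halt₁ halt₂ (a ⊗ₜ s, 0) (0, v)⁆ =
      tripleProduct halt₁ halt₂ (D (a ⊗ₜ s, 0)) (0, v) +
        tripleProduct halt₁ halt₂ (a ⊗ₜ s, 0) (D (0, v)))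
    (vec_vec : ∀ u v, ⁅D, tripleProduct halt₁ halt₂ (0, u) (0, v)⁆ =
      tripleProduct halt₁ halt₂ (D (0, u)) (0, v) +
        tripleProduct halt₁ halt₂ (0, u) (D (0, v))) :
    D ∈ tripleDerivations (tripleProduct halt₁ halt₂) := fun x y ↦ by
  induction x, y using induction_symm with
  | symm x y h =>
    rw [tripleProduct_comm, h, add_comm, tripleProduct_comm, tripleProduct_comm _ _ (D x)]
  | add x x' y h h' =>
    simp only [map_add, LinearMap.add_apply, lie_add, h, h']
    abel
  | tmul_tmul a s b t => exact tmul_tmul a s b t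
  | tmul_vec a s v => exact tmul_vec a s v
  | vec_vec u v => exact vec_vec u v

lemma leftAction_mem_tripleDerivations (σ : spSub k V₁ B₁) :
    leftAction B₁ B₂ σ ∈ tripleDerivations (tripleProduct halt₁ halt₂) := by
  refine mem_tripleDerivations_tripleProduct halt₁ halt₂ (fun a s b t ↦ ?_) (fun a s v ↦ ?_)
    (fun u v ↦ ?_)
  · simp [lie_leftAction_leftAction, lie_leftAction_rightAction, bracket_gamma, form_apply_left]
  · simp [lie_leftAction_oddAction]
  · simp [lie_leftAction_rightAction]

lemma rightAction_mem_tripleDerivations (r : spSub k V₂ B₂) :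
    rightAction V₁ B₂ r ∈ tripleDerivations (tripleProduct halt₁ halt₂) := by
  refine mem_tripleDerivations_tripleProduct halt₁ halt₂ (fun a s b t ↦ ?_) (fun a s v ↦ ?_)
    (fun u v ↦ ?_)
  · simp only [tripleProduct_tmul_tmul, lie_sub, lie_smul, lie_rightAction_leftAction,
      lie_rightAction_rightAction, bracket_leibniz r s t, rightAction_tmul, traceForm_bracket,
      map_add]
    module
  · simp only [tripleProduct_tmul_vec, lie_neg, lie_rightAction_oddAction, rightAction_tmul,
      rightAction_vec, bracket_apply, map_sub]
    abel
  · simp only [tripleProduct_vec_vec, lie_neg, lie_rightAction_rightAction, bracket_gamma,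
      rightAction_vec, map_add]
    abel

lemma mem_spSub_form {D : Module.End k (STS8 V₁ B₂)} (halt₁ : B₁.IsAlt) (halt₂ : B₂.IsAlt)
    (tmul_tmul : ∀ a s b t, form B₁ B₂ (D (a ⊗ₜ s, 0)) (b ⊗ₜ t, 0) +
      form B₁ B₂ (a ⊗ₜ s, 0) (D (b ⊗ₜ t, 0)) = 0)
    (tmul_vec : ∀ a s v, form B₁ B₂ (D (a ⊗ₜ s, 0)) (0, v) +
      form B₁ B₂ (a ⊗ₜ s, 0) (D (0, v)) = 0)
    (vec_vec : ∀ u v, form B₁ B₂ (D (0, u)) (0, v) + form B₁ B₂ (0, u) (D (0, v)) = 0) :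
    D ∈ spSub k _ (form B₁ B₂) := fun x y ↦ by
  induction x, y using induction_symm with
  | symm x y h =>
    rw [← neg_form halt₁ halt₂ x, ← neg_form halt₁ halt₂ (D x)]
    linear_combination -h
  | add x x' y h h' =>
    simp only [map_add, LinearMap.add_apply]
    linear_combination h + h'
  | tmul_tmul a s b t => exact tmul_tmul a s b t
  | tmul_vec a s v => exact tmul_vec a s v
  | vec_vec u v => exact vec_vec u v

include halt₁ halt₂

lemma leftAction_mem_spSub (σ : spSub k V₁ B₁) :
    leftAction B₁ B₂ σ ∈ spSub k _ (form B₁ B₂) :=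
  mem_spSub_form halt₁ halt₂ (by simp [form_apply_left]) (by simp) (by simp)

lemma rightAction_mem_spSub (r : spSub k V₂ B₂) :
    rightAction V₁ B₂ r ∈ spSub k _ (form B₁ B₂) :=
  mem_spSub_form halt₁ halt₂ (by simp [traceForm_bracket]) (by simp) (by simp [form_apply_left])

end Generators

section CharThree

variable [CharP k 3] (halt₁ : B₁.IsAlt) (halt₂ : B₂.IsAlt)
include halt₁

lemma oddAction_mem_spSub [FiniteDimensional k V₂] (a : V₁) (u : V₂) :
    oddAction B₁ halt₂ a u ∈ spSub k _ (form B₁ B₂) := by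
  refine mem_spSub_form halt₁ halt₂ (by simp) (fun b s w ↦ ?_) (by simp)
  simp only [oddAction_tmul, oddAction_vec, form_vec_vec, form_tmul_tmul, map_smul,
    LinearMap.smul_apply, smul_eq_mul, form_apply_left, traceForm_gamma, ← halt₁.neg a b]
  linear_combination -(B₁ a b * B₂ u (s.1 w)) * CharP.ofNat_eq_zero k 3

variable (h₁ : Module.finrank k V₁ = 2) (h₂ : Module.finrank k V₂ = 2) (hne₂ : B₂ ≠ 0)
include h₂ hne₂

lemma tripleProduct_apply_sub_swap_vec (w : V₂) (y z : STS8 V₁ B₂) :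
    tripleProduct halt₁ halt₂ (0, w) y z - tripleProduct halt₁ halt₂ (0, w) z y =
      form B₁ B₂ (0, w) z • y - form B₁ B₂ (0, w) y • z + (2 * form B₁ B₂ y z) • (0, w) := by
  have three_eq_zero : (3 : k) = 0 := CharP.ofNat_eq_zero k 3
  induction y, z using induction_symm with
  | symm y z h =>
    rw [← neg_form halt₁ halt₂ y z]
    linear_combination (norm := module) -h
  | add y y' z h h' =>
    simp only [map_add, LinearMap.add_apply]
    linear_combination (norm := module) h + h'
  | tmul_tmul a s b t =>
    have hst := anticommutator halt₂ h₂ hne₂ s t w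
    ext1
    · simp
    · simp only [tripleProduct_vec_tmul, LinearMap.neg_apply, oddAction_tmul, form_vec_tmul,
        form_tmul_tmul, ← halt₁.neg a b, Prod.neg_mk, Prod.mk_sub_mk, Prod.smul_mk, zero_smul,
        sub_zero, zero_add]
      linear_combination (norm := module)
        -(B₁ a b • hst) - three_eq_zero • B₁ a b • traceForm B₂ s t • w
  | tmul_vec a s v =>
    have hgamma := congrArg (a ⊗ₜ[k] ·) (gamma_apply_sub_gamma_apply halt₂ h₂ s w v)
    simp only [TensorProduct.tmul_sub, TensorProduct.tmul_smul] at hgamma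
    ext1
    · simp only [tripleProduct_vec_tmul, tripleProduct_vec_vec, LinearMap.neg_apply, oddAction_vec,
        rightAction_tmul, form_vec_vec, form_vec_tmul, form_tmul_vec, ← neg_bracket _ s,
        bracket_gamma, TensorProduct.tmul_add, TensorProduct.tmul_neg, Prod.neg_mk,
        Prod.mk_sub_mk, Prod.smul_mk, zero_smul, mul_zero, sub_zero, add_zero]
      linear_combination (norm := module) -hgamma -
        three_eq_zero • (a ⊗ₜ[k] gamma halt₂ (s.1 w) v + B₂ w v • a ⊗ₜ[k] s)
    · simp
  | vec_vec u v =>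
    have hcyc := isAlt_smul_cyclic_of_finrank_eq_two halt₂ h₂ w u v
    rw [← halt₂.neg w v] at hcyc
    ext1
    · simp
    · simp only [tripleProduct_vec_vec, LinearMap.neg_apply, rightAction_vec, gamma_apply,
        form_vec_vec, ← halt₂.neg u v, Prod.neg_mk, Prod.mk_sub_mk, Prod.smul_mk, Prod.mk_add_mk]
      linear_combination (norm := module) (2 : k) • hcyc - three_eq_zero • (2 * B₂ u v) • w

include h₁

lemma oddAction_mem_tripleDerivations (a : V₁) (u : V₂) :
    oddAction B₁ halt₂ a u ∈ tripleDerivations (tripleProduct halt₁ halt₂) := by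
  have three_eq_zero : (3 : k) = 0 := CharP.ofNat_eq_zero k 3
  have : FiniteDimensional k V₂ := .of_finrank_pos (by simp [h₂])
  refine mem_tripleDerivations_tripleProduct halt₁ halt₂ (fun b s c t ↦ ?_) (fun b s w ↦ ?_)
    (fun v w ↦ ?_)
  · have hcyc (z : V₂) := congrArg (oddAction B₁ halt₂ · z)
      (isAlt_smul_cyclic_of_finrank_eq_two halt₁ h₁ a b c)
    have hst (e : V₁) := congrArg (oddAction B₁ halt₂ e) (anticommutator halt₂ h₂ hne₂ s t u)
    simp only [map_add, map_smul, map_zero, LinearMap.add_apply, LinearMap.smul_apply,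
      LinearMap.zero_apply, ← halt₁.neg a c] at hcyc hst
    simp only [tripleProduct_tmul_tmul, oddAction_tmul, lie_sub, lie_smul, lie_oddAction_leftAction,
      lie_oddAction_rightAction, tripleProduct_tmul_vec, tripleProduct_vec_tmul, gamma_apply,
      bracket_apply, map_add, map_sub, map_smul, LinearMap.add_apply, LinearMap.smul_apply,
      ← halt₁.neg a]
    linear_combination (norm := module) -(B₁ a b • hst c) - B₁ a c • hst b +
      hcyc (s.1 (t.1 u)) - hcyc (t.1 (s.1 u)) +
      three_eq_zero • (B₁ a c • oddAction B₁ halt₂ b (s.1 (t.1 u)) +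
        B₁ a b • oddAction B₁ halt₂ c (t.1 (s.1 u)))
  · simp only [tripleProduct_tmul_vec, oddAction_tmul, oddAction_vec, tripleProduct_vec_vec,
      tripleProduct_tmul_tmul, lie_neg, lie_oddAction_oddAction halt₁ h₁ halt₂ h₂,
      traceForm_gamma, bracket_gamma, gamma_comm halt₁ b, ← halt₁.neg a b, map_add, map_smul,
      LinearMap.smul_apply]
    linear_combination (norm := module) -three_eq_zero •
      B₂ u (s.1 w) • leftAction B₁ B₂ (gamma halt₁ a b)
  · have hcyc := congrArg (oddAction B₁ halt₂ a) (gamma_cyclic halt₂ u v w)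
    simp only [map_add, map_zero] at hcyc
    simp only [tripleProduct_vec_vec, lie_neg, lie_oddAction_rightAction, neg_neg, oddAction_vec,
      tripleProduct_tmul_vec, tripleProduct_vec_tmul, gamma_comm halt₂ u w]
    linear_combination (norm := module) hcyc

lemma tripleProduct_apply_sub_swap_tmul (c : V₁) (r : spSub k V₂ B₂) (y z : STS8 V₁ B₂) :
    tripleProduct halt₁ halt₂ (c ⊗ₜ r, 0) y z - tripleProduct halt₁ halt₂ (c ⊗ₜ r, 0) z y =
      form B₁ B₂ (c ⊗ₜ r, 0) z • y - form B₁ B₂ (c ⊗ₜ r, 0) y • z +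
        (2 * form B₁ B₂ y z) • (c ⊗ₜ r, 0) := by
  have three_eq_zero : (3 : k) = 0 := CharP.ofNat_eq_zero k 3
  induction y, z using induction_symm with
  | symm y z h =>
    rw [← neg_form halt₁ halt₂ y z]
    linear_combination (norm := module) -h
  | add y y' z h h' =>
    simp only [map_add, LinearMap.add_apply]
    linear_combination (norm := module) h + h'
  | tmul_tmul a s b t =>
    have hcyc (q : spSub k V₂ B₂) := congrArg (· ⊗ₜ[k] q)
      (isAlt_smul_cyclic_of_finrank_eq_two halt₁ h₁ c a b)
    simp only [TensorProduct.add_tmul, ← TensorProduct.smul_tmul', TensorProduct.zero_tmul,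
      ← halt₁.neg c b] at hcyc
    ext1
    · simp only [tripleProduct_tmul_tmul, LinearMap.sub_apply, LinearMap.smul_apply,
        leftAction_tmul, rightAction_tmul, form_tmul_tmul, bracket_bracket halt₂ h₂ hne₂,
        gamma_apply, traceForm_comm t s, ← halt₁.neg a b, TensorProduct.add_tmul,
        TensorProduct.tmul_sub, TensorProduct.tmul_smul, ← TensorProduct.smul_tmul',
        Prod.mk_sub_mk, Prod.mk_add_mk, Prod.smul_mk]
      linear_combination (norm := module) traceForm B₂ r s • hcyc t + traceForm B₂ r t • hcyc s -
        (2 * traceForm B₂ s t) • hcyc r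
    · simp
  | tmul_vec a s v =>
    have hrs := anticommutator halt₂ h₂ hne₂ r s v
    ext1
    · simp
    · simp only [tripleProduct_tmul_tmul, tripleProduct_tmul_vec, LinearMap.sub_apply,
        LinearMap.smul_apply, LinearMap.neg_apply, leftAction_vec, rightAction_vec, oddAction_tmul,
        form_tmul_tmul, form_tmul_vec, bracket_apply, Prod.neg_mk, Prod.mk_sub_mk, Prod.smul_mk,
        smul_zero, zero_sub, mul_zero, zero_smul, add_zero]
      linear_combination (norm := module)
        three_eq_zero • B₁ c a • s.1 (r.1 v) - B₁ c a • hrs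
  | vec_vec u v =>
    ext1
    · simp only [tripleProduct_tmul_vec, LinearMap.neg_apply, oddAction_vec, form_tmul_vec,
        form_vec_vec, gamma_comm halt₂ (r.1 v) u, zero_smul, sub_zero, zero_add, Prod.neg_mk,
        Prod.mk_sub_mk, Prod.smul_mk, ← TensorProduct.tmul_smul,
        ← gamma_apply_sub_gamma_apply halt₂ h₂ r u v, TensorProduct.tmul_sub]
      abel
    · simp

lemma isSympTripleSystem :
    IsSympTripleSystem k (STS8 V₁ B₂) (tripleProduct halt₁ halt₂) (form B₁ B₂) := by
  have : FiniteDimensional k V₂ := .of_finrank_pos (by simp [h₂])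
  refine ⟨form_isAlt halt₁ halt₂, form_ne_zero hne₂, fun x y z ↦ ?_, fun x y z ↦ ?_,
    fun x y u v w ↦ ?_, fun x y ↦ ?_⟩
  · rw [tripleProduct_comm]
  · induction x using induction with
    | tmul c r => exact tripleProduct_apply_sub_swap_tmul halt₁ halt₂ h₁ h₂ hne₂ c r y z
    | vec w => exact tripleProduct_apply_sub_swap_vec halt₁ halt₂ h₂ hne₂ w y z
    | add x x' hx hx' =>
      simp only [map_add, LinearMap.add_apply]
      linear_combination (norm := module) hx + hx'
  · have hder : tripleProduct halt₁ halt₂ x y ∈ tripleDerivations (tripleProduct halt₁ halt₂) :=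
      tripleProduct_mem halt₁ halt₂ (leftAction_mem_tripleDerivations halt₁ halt₂)
        (rightAction_mem_tripleDerivations halt₁ halt₂)
        (oddAction_mem_tripleDerivations halt₁ halt₂ h₁ h₂ hne₂) x y
    have huv := LinearMap.congr_fun (hder u v) w
    rwa [Ring.lie_def, LinearMap.sub_apply, sub_eq_iff_eq_add] at huv
  · exact tripleProduct_mem (P := spSub k _ (form B₁ B₂)) halt₁ halt₂
      (leftAction_mem_spSub halt₁ halt₂) (rightAction_mem_spSub halt₁ halt₂)
      (oddAction_mem_spSub halt₁ halt₂) x y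

end CharThree

end STS8

/-- Let `k` be a field of characteristic 3, let `V₁, V₂` be
two-dimensional spaces with nonzero alternating forms `B₁, B₂`, and let
`W = (V₁ ⊗ sp(V₂)) ⊕ V₂`, with the alternating form `Bw` given by
`(a₁⊗s₂ | b₁⊗t₂) = ⟨a₁|b₁⟩₁ tr(s₂t₂)`, `(V₁⊗sp(V₂) | V₂) = 0`, `(a₂|b₂) = ⟨a₂|b₂⟩₂`,
and the symmetric bilinear map `d : W × W → gl(W)` determined on generators as in the
text. Then `W` with the triple product `[ABC] = d_{A,B}(C)` and the form `Bw` is a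
symplectic triple system. -/
theorem STS8_char_three (k V₁ V₂ : Type*) [Field k]
    [AddCommGroup V₁] [Module k V₁] [AddCommGroup V₂] [Module k V₂]
    [FiniteDimensional k V₁] [FiniteDimensional k V₂]
    (hchar : ringChar k = 3)
    (h1 : Module.finrank k V₁ = 2) (h2 : Module.finrank k V₂ = 2)
    (B₁ : V₁ →ₗ[k] V₁ →ₗ[k] k) (h1alt : ∀ v, B₁ v v = 0) (h1ne : B₁ ≠ 0)
    (B₂ : V₂ →ₗ[k] V₂ →ₗ[k] k) (h2alt : ∀ v, B₂ v v = 0) (h2ne : B₂ ≠ 0)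
    (Bw : ((V₁ ⊗[k] ↥(spSub k V₂ B₂)) × V₂) →ₗ[k]
        ((V₁ ⊗[k] ↥(spSub k V₂ B₂)) × V₂) →ₗ[k] k)
    (d : ((V₁ ⊗[k] ↥(spSub k V₂ B₂)) × V₂) →ₗ[k]
        ((V₁ ⊗[k] ↥(spSub k V₂ B₂)) × V₂) →ₗ[k]
        ((V₁ ⊗[k] ↥(spSub k V₂ B₂)) × V₂) →ₗ[k] ((V₁ ⊗[k] ↥(spSub k V₂ B₂)) × V₂))
    -- the values of the alternating form `Bw` on generators:
    (hBw1 : ∀ (a₁ b₁ : V₁) (s₂ t₂ : ↥(spSub k V₂ B₂)),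
      Bw (a₁ ⊗ₜ[k] s₂, 0) (b₁ ⊗ₜ[k] t₂, 0) =
        B₁ a₁ b₁ * LinearMap.trace k V₂ ((s₂ : V₂ →ₗ[k] V₂) ∘ₗ (t₂ : V₂ →ₗ[k] V₂)))
    (hBw2 : ∀ (a₁ : V₁) (s₂ : ↥(spSub k V₂ B₂)) (c₂ : V₂),
      Bw (a₁ ⊗ₜ[k] s₂, 0) (0, c₂) = 0)
    (hBw3 : ∀ (a₁ : V₁) (s₂ : ↥(spSub k V₂ B₂)) (c₂ : V₂),
      Bw (0, c₂) (a₁ ⊗ₜ[k] s₂, 0) = 0)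
    (hBw4 : ∀ a₂ b₂ : V₂, Bw (0, a₂) (0, b₂) = B₂ a₂ b₂)
    -- `d` is symmetric:
    (hdsymm : ∀ A C, d A C = d C A)
    -- the values of `d` on generators:
    (hd1a : ∀ (a₁ b₁ c₁ : V₁) (s₂ t₂ r₂ u : ↥(spSub k V₂ B₂)),
      (u : V₂ →ₗ[k] V₂) =
          ((s₂ : V₂ →ₗ[k] V₂) ∘ₗ (t₂ : V₂ →ₗ[k] V₂) -
            (t₂ : V₂ →ₗ[k] V₂) ∘ₗ (s₂ : V₂ →ₗ[k] V₂)) ∘ₗ (r₂ : V₂ →ₗ[k] V₂) -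
          (r₂ : V₂ →ₗ[k] V₂) ∘ₗ ((s₂ : V₂ →ₗ[k] V₂) ∘ₗ (t₂ : V₂ →ₗ[k] V₂) -
            (t₂ : V₂ →ₗ[k] V₂) ∘ₗ (s₂ : V₂ →ₗ[k] V₂)) →
      d (a₁ ⊗ₜ[k] s₂, 0) (b₁ ⊗ₜ[k] t₂, 0) (c₁ ⊗ₜ[k] r₂, 0) =
        ((LinearMap.trace k V₂ ((s₂ : V₂ →ₗ[k] V₂) ∘ₗ (t₂ : V₂ →ₗ[k] V₂))) •
            (gammaMap k V₁ B₁ a₁ b₁ c₁) ⊗ₜ[k] r₂ - B₁ a₁ b₁ • c₁ ⊗ₜ[k] u, 0))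
    (hd1b : ∀ (a₁ b₁ : V₁) (s₂ t₂ : ↥(spSub k V₂ B₂)) (c₂ : V₂),
      d (a₁ ⊗ₜ[k] s₂, 0) (b₁ ⊗ₜ[k] t₂, 0) (0, c₂) =
        (0, -(B₁ a₁ b₁) • ((s₂ : V₂ →ₗ[k] V₂) ((t₂ : V₂ →ₗ[k] V₂) c₂) -
          (t₂ : V₂ →ₗ[k] V₂) ((s₂ : V₂ →ₗ[k] V₂) c₂))))
    (hd2a : ∀ (a₁ c₁ : V₁) (s₂ r₂ : ↥(spSub k V₂ B₂)) (a₂ : V₂),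
      d (a₁ ⊗ₜ[k] s₂, 0) (0, a₂) (c₁ ⊗ₜ[k] r₂, 0) =
        (0, -(B₁ a₁ c₁) • (r₂ : V₂ →ₗ[k] V₂) ((s₂ : V₂ →ₗ[k] V₂) a₂)))
    (hd2b : ∀ (a₁ : V₁) (s₂ u : ↥(spSub k V₂ B₂)) (a₂ c₂ : V₂),
      (u : V₂ →ₗ[k] V₂) = gammaMap k V₂ B₂ ((s₂ : V₂ →ₗ[k] V₂) a₂) c₂ →
      d (a₁ ⊗ₜ[k] s₂, 0) (0, a₂) (0, c₂) = (-(a₁ ⊗ₜ[k] u), 0))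
    (hd3a : ∀ (c₁ : V₁) (r₂ u : ↥(spSub k V₂ B₂)) (a₂ b₂ : V₂),
      (u : V₂ →ₗ[k] V₂) =
          gammaMap k V₂ B₂ a₂ b₂ ∘ₗ (r₂ : V₂ →ₗ[k] V₂) -
          (r₂ : V₂ →ₗ[k] V₂) ∘ₗ gammaMap k V₂ B₂ a₂ b₂ →
      d (0, a₂) (0, b₂) (c₁ ⊗ₜ[k] r₂, 0) = (-(c₁ ⊗ₜ[k] u), 0))
    (hd3b : ∀ a₂ b₂ c₂ : V₂,
      d (0, a₂) (0, b₂) (0, c₂) = (0, -(gammaMap k V₂ B₂ a₂ b₂ c₂))) :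
    IsSympTripleSystem k ((V₁ ⊗[k] ↥(spSub k V₂ B₂)) × V₂) d Bw := by
  have : CharP k 3 := ringChar.of_eq hchar
  have halt₁ : B₁.IsAlt := h1alt
  have halt₂ : B₂.IsAlt := h2alt
  obtain rfl : Bw = STS8.form B₁ B₂ := STS8.bilin_ext
    (fun a s b t ↦ (hBw1 a b s t).trans (STS8.form_tmul_tmul a b s t).symm)
    (fun a s v ↦ (hBw2 a s v).trans (STS8.form_tmul_vec a s v).symm)
    (fun v a s ↦ (hBw3 a s v).trans (STS8.form_vec_tmul a s v).symm)
    (fun u v ↦ (hBw4 u v).trans (STS8.form_vec_vec u v).symm)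
  have tmul_vec (a : V₁) (s : spSub k V₂ B₂) (v : V₂) :
      d (a ⊗ₜ s, 0) (0, v) = STS8.tripleProduct halt₁ halt₂ (a ⊗ₜ s, 0) (0, v) :=
    STS8.hom_ext (fun c r ↦ by simp [hd2a])
      (fun w ↦ by simp [hd2b a s (spSub.gamma halt₂ (s.1 v) w) v w rfl])
  obtain rfl : d = STS8.tripleProduct halt₁ halt₂ := STS8.bilin_ext
    (fun a s b t ↦ STS8.hom_ext
      (fun c r ↦ by
        rw [hd1a a b c s t r (spSub.bracket B₂ (spSub.bracket B₂ s t) r) rfl]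
        simp [spSub.traceForm_apply, spSub.coe_gamma, Module.End.mul_eq_comp])
      (fun v ↦ by simp [hd1b, spSub.bracket_apply]))
    tmul_vec
    (fun u a s ↦ by rw [hdsymm, tmul_vec, STS8.tripleProduct_comm])
    (fun u v ↦ STS8.hom_ext
      (fun c r ↦ by simp [hd3a c r (spSub.bracket B₂ (spSub.gamma halt₂ u v) r) u v rfl])
      (fun w ↦ by simp [hd3b, spSub.coe_gamma]))
  exact STS8.isSympTripleSystem halt₁ halt₂ h1 h2 h2ne
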